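/- For all n ≥ 0 and r ≥ 1, G_{a,b}(n+1;r) = r · Σ_{i=0}^{n} C(n,i) · G_{a,b}(n−i;r−1) · ∏_{j=0}^{i}(a·j + a + b) + Σ_{i=0}^{n} C(n,i) · G_{a,b}(n−i;r) · ∏_{j=0}^{i−1}(a·j + a + b), where G_{a,b}(n;r) := Σ_{k=0}^{n} G_{a,b}(n,k;r). -/

import Mathlib

/-!
Write `A i = ∏_{j<i} (a j + a + b)`. In terms of exponential generating functions, let
`P = ∑ A i t^i / i!` and let `F k r` be the generating function of the column
`n ↦ genLah a b r n k`. The theorem is the sum over `k` of the column identity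
`(F k r)' = r P' F k (r-1) + P F (k-1) r`.

The operator `E = (1 - a t) d/dt` is a derivation, and the recurrences say `E P = (a + b) P`,
`E P' = (2 a + b) P'` and `E (F k r) = F (k-1) r + (b k + (a + b) r) F k r`. Hence both sides `Y k`
of the column identity satisfy `E (Y k) = (a + b k + (a + b) r) Y k + Y (k-1)`, and they have the
same constant term, so they agree.

Since `R` need not be a `ℚ`-algebra, products of exponential generating functions are encoded as
binomial convolutions of sequences (`binomConv`), and the derivation rule for `E` becomes
`binomConv_succ_of_rec`. The column identity is `genLah_column_succ`.
-/

open Finset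

/-- The generalized r-Lah numbers `G_{a,b}(n,k;r)`. -/
def genLah {R : Type*} [CommRing R] (a b : R) (r : ℕ) : ℕ → ℕ → R
  | 0, 0 => 1
  | 0, _ + 1 => 0
  | n + 1, 0 => (a * ((n : R) + (r : R)) + b * (r : R)) * genLah a b r n 0
  | n + 1, k + 1 => genLah a b r n k +
      (a * (n : R) + b * ((k : R) + 1) + (a + b) * (r : R)) * genLah a b r n (k + 1)

/-- The binomial convolution `n ↦ ∑_{i+j=n} C(n,i) f i g j`, i.e. the product of the exponential
generating functions of `f` and `g`. -/
def binomConv {R : Type*} [CommRing R] (f g : ℕ → R) (n : ℕ) : R :=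
  ∑ p ∈ antidiagonal n, (n.choose p.1 : R) * (f p.1 * g p.2)

lemma binomConv_eq_sum_range {R : Type*} [CommRing R] (f g : ℕ → R) (n : ℕ) :
    binomConv f g n = ∑ i ∈ range (n + 1), (n.choose i : R) * g (n - i) * f i := by
  rw [binomConv, Finset.Nat.sum_antidiagonal_eq_sum_range_succ_mk]
  exact sum_congr rfl fun i _ => by ring

/-- The derivation rule for `E = (1 - a t) d/dt`: if `E f = c f` and `E g = d g + h`, then
`E (f g) = (c + d) f g + f h`. -/
lemma binomConv_succ_of_rec {R : Type*} [CommRing R] (a c d : R) (f g h : ℕ → R)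
    (hf : ∀ i, f (i + 1) = (a * (i : R) + c) * f i)
    (hg : ∀ j, g (j + 1) = (a * (j : R) + d) * g j + h j) (n : ℕ) :
    binomConv f g (n + 1) =
      (a * (n : R) + c + d) * binomConv f g n + binomConv f h n := by
  simp only [binomConv]
  rw [Finset.sum_antidiagonal_choose_succ_mul (fun i j => f i * g j), mul_sum,
    ← sum_add_distrib, ← sum_add_distrib]
  refine sum_congr rfl fun p hp => ?_
  have hp' : p.1 + p.2 = n := by simpa using hp
  have hc : n.choose p.2 = n.choose p.1 := by
    rw [← hp']; exact (Nat.choose_symm_add).symm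
  have hn : (n : R) = (p.1 : R) + (p.2 : R) := by rw [← hp']; push_cast; ring
  rw [hf, hg, hc, hn]
  ring

/-- The column to the left of column `k`: `genLah a b r n (k - 1)`, and `0` when `k = 0`. -/
def genLahPrev {R : Type*} [CommRing R] (a b : R) (r : ℕ) : ℕ → ℕ → R
  | _, 0 => 0
  | n, k + 1 => genLah a b r n k

lemma genLah_succ {R : Type*} [CommRing R] (a b : R) (r n k : ℕ) :
    genLah a b r (n + 1) k =
      (a * (n : R) + (b * (k : R) + (a + b) * (r : R))) * genLah a b r n k
        + genLahPrev a b r n k := by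
  cases k with
  | zero => simp only [genLah, genLahPrev]; push_cast; ring
  | succ k => simp only [genLah, genLahPrev]; push_cast; ring

lemma genLah_eq_zero {R : Type*} [CommRing R] (a b : R) (r : ℕ) :
    ∀ n k : ℕ, n < k → genLah a b r n k = 0
  | 0, k + 1, _ => by simp only [genLah]
  | n + 1, k + 1, h => by
    simp only [genLah]
    rw [genLah_eq_zero a b r n k (by omega), genLah_eq_zero a b r n (k + 1) (by omega)]
    ring

lemma binomConv_zero_right {R : Type*} [CommRing R] (f : ℕ → R) (n : ℕ) :
    binomConv f (fun _ => 0) n = 0 := by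
  simp [binomConv]

/-- The column identity `(F k (s+1))' = (s+1) P' F k s + P F (k-1) (s+1)` of exponential
generating functions: both sides satisfy the same first-order recurrence in `n`. -/
lemma genLah_column_succ {R : Type*} [CommRing R] (a b : R) (s n : ℕ) : ∀ k : ℕ,
    genLah a b (s + 1) (n + 1) k =
      ((s + 1 : ℕ) : R) * binomConv (fun i => ∏ j ∈ range (i + 1), (a * (j : R) + a + b))
          (fun m => genLah a b s m k) n +
        binomConv (fun i => ∏ j ∈ range i, (a * (j : R) + a + b))
          (fun m => genLahPrev a b (s + 1) m k) n := by
  have hA : ∀ i : ℕ, ∏ j ∈ range (i + 1), (a * (j : R) + a + b) =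
      (a * (i : R) + (a + b)) * ∏ j ∈ range i, (a * (j : R) + a + b) := fun i => by
    rw [prod_range_succ]; ring
  have hA' : ∀ i : ℕ, ∏ j ∈ range (i + 1 + 1), (a * (j : R) + a + b) =
      (a * (i : R) + (2 * a + b)) * ∏ j ∈ range (i + 1), (a * (j : R) + a + b) := fun i => by
    rw [prod_range_succ]; push_cast; ring
  induction n with
  | zero =>
    intro k
    rcases k with _ | _ | k <;> simp [binomConv, genLah, genLahPrev]
    ring
  | succ n ih =>
    intro k
    have h1 := binomConv_succ_of_rec a _ _
      (fun i => ∏ j ∈ range (i + 1), (a * (j : R) + a + b)) (fun m => genLah a b s m k)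
      (fun m => genLahPrev a b s m k) hA' (fun m => genLah_succ a b s m k) n
    cases k with
    | zero =>
      have h0 := ih 0
      rw [genLah_succ, h1, h0]
      simp only [genLahPrev, binomConv_zero_right]
      push_cast
      ring
    | succ k =>
      have h2 := binomConv_succ_of_rec a _ _
        (fun i => ∏ j ∈ range i, (a * (j : R) + a + b)) (fun m => genLah a b (s + 1) m k)
        (fun m => genLahPrev a b (s + 1) m k) hA (fun m => genLah_succ a b (s + 1) m k) n
      have h3 := ih (k + 1)
      have h4 := ih k
      simp only [genLahPrev] at h1 h2 h3 h4 ⊢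
      rw [genLah_succ, h1, h2, h3]
      simp only [genLahPrev]
      rw [h4]
      push_cast
      ring

/-- The entries right of the diagonal vanish, so a row sum may be taken over any longer range. -/
lemma genLah_sum_range_of_le {R : Type*} [CommRing R] (a b : R) (r m N : ℕ) (h : m + 1 ≤ N) :
    ∑ k ∈ range N, genLah a b r m k = ∑ k ∈ range (m + 1), genLah a b r m k := by
  refine (Finset.sum_subset (Finset.range_subset_range.2 h) fun k _ hk => ?_).symm
  exact genLah_eq_zero a b r m k (by rw [Finset.mem_range] at hk; omega)

theorem genLah_rowSum_succ {R : Type*} [CommRing R] (a b : R) (r n : ℕ) (hr : 1 ≤ r) :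
    (∑ k ∈ range (n + 2), genLah a b r (n + 1) k) =
      (r : R) * ∑ i ∈ range (n + 1), (n.choose i : R) *
          (∑ k ∈ range (n - i + 1), genLah a b (r - 1) (n - i) k) *
          ∏ j ∈ range (i + 1), (a * (j : R) + a + b) +
        ∑ i ∈ range (n + 1), (n.choose i : R) *
          (∑ k ∈ range (n - i + 1), genLah a b r (n - i) k) *
          ∏ j ∈ range i, (a * (j : R) + a + b) := by
  obtain ⟨s, rfl⟩ : ∃ s, r = s + 1 := ⟨r - 1, by omega⟩
  simp only [genLah_column_succ, Nat.add_sub_cancel, binomConv_eq_sum_range]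
  rw [sum_add_distrib, ← mul_sum, sum_comm]
  congr 1
  · congr 1
    refine sum_congr rfl fun i _ => ?_
    rw [← sum_mul, ← mul_sum, genLah_sum_range_of_le a b s (n - i) (n + 2) (by omega)]
  · rw [sum_comm]
    refine sum_congr rfl fun i _ => ?_
    rw [← sum_mul, ← mul_sum, sum_range_succ']
    simp only [genLahPrev, add_zero]
    rw [genLah_sum_range_of_le a b (s + 1) (n - i) (n + 1) (by omega)]
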